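/- Assume a_0 is the unique point of ℤ^n lying in the interior of Δ, the convex hull of a_1,…,a_N in ℝ^n. Then there exists a constant C ∈ (0,1), depending only on p, such that every ξ ∈ S whose coefficient ξ_{â_0} is zero satisfies ‖α*(ξ)‖ ≤ C·(1/p)·‖ξ‖. -/

import Mathlib

open scoped BigOperators Classical

namespace AHG

/-- `hat v = (1, v) ∈ ℤ^{n+1}`: coordinate `0` equals `1`, the rest is `v`. -/
def hat {n : ℕ} (v : Fin n → ℤ) : Fin (n + 1) → ℤ := Fin.cons 1 v

/-- The coefficients `b_i` of the Dwork series
`θ(t) = exp(π(t - t^p)) = exp(πt)·exp(-πt^p) = Σ b_i t^i`;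
explicitly `b_i = Σ_{j + p k = i} π^{j+k} (-1)^k / (j! k!)`. -/
noncomputable def dworkB (p : ℕ) {K : Type*} [Field K] (π : K) (i : ℕ) : K :=
  ∑ k ∈ Finset.range (i + 1),
    if p * k ≤ i then
      ((-1 : K) ^ k * π ^ (i - p * k + k)) /
        ((Nat.factorial (i - p * k) : K) * (Nat.factorial k : K))
    else 0

/-- The real cone `C` generated by `â_0, …, â_N`. -/
def cone {n N : ℕ} (a : Fin (N + 1) → Fin n → ℤ) : Set (Fin (n + 1) → ℝ) :=
  {x | ∃ t : Fin (N + 1) → ℝ, (∀ j, 0 ≤ t j) ∧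
      x = ∑ j, t j • fun i => (hat (a j) i : ℝ)}

/-- `M = C ∩ ℤA`. -/
def latticeM {n N : ℕ} (a : Fin (N + 1) → Fin n → ℤ) : Set (Fin (n + 1) → ℤ) :=
  {μ | (fun i => (μ i : ℝ)) ∈ cone a ∧
      μ ∈ AddSubgroup.closure (Set.range fun j => hat (a j))}

/-- `M°`: the elements of `M` lying on no proper (exposed) face of `C`, i.e. every linear
functional nonnegative on `C` and vanishing at `μ` vanishes identically on `C`. -/
def latticeMint {n N : ℕ} (a : Fin (N + 1) → Fin n → ℤ) : Set (Fin (n + 1) → ℤ) :=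
  {μ | μ ∈ latticeM a ∧
      ∀ ℓ : (Fin (n + 1) → ℝ) →ₗ[ℝ] ℝ, (∀ x ∈ cone a, 0 ≤ ℓ x) →
        ℓ (fun i => (μ i : ℝ)) = 0 → ∀ x ∈ cone a, ℓ x = 0}

/-- `a 0` is the unique lattice point interior to `Δ = conv(a 1, …, a N)`. -/
def uniqueInteriorPoint {n N : ℕ} (a : Fin (N + 1) → Fin n → ℤ) : Prop :=
  (fun i => (a 0 i : ℝ)) ∈
      interior (convexHull ℝ (Set.range fun j : Fin N => fun i => (a j.succ i : ℝ))) ∧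
    ∀ v : Fin n → ℤ,
      (fun i => (v i : ℝ)) ∈
          interior (convexHull ℝ (Set.range fun j : Fin N => fun i => (a j.succ i : ℝ))) →
        v = a 0

/-- The set `L_+`, identified with the tuples `(l_1,…,l_N) ∈ ℤ_{≥0}^N` such that
`Σ l_i â_i = (Σ l_i) â_0` (then `l_0 = -Σ l_i`). -/
def LplusSet {n N : ℕ} (a : Fin (N + 1) → Fin n → ℤ) : Set (Fin N → ℕ) :=
  {l | ∑ i : Fin N, l i • hat (a i.succ) = (∑ i : Fin N, l i) • hat (a 0)}

/-- The norm (sup of coefficient norms) of an element of `R`, i.e. of a formal power series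
in the variables `λ_i/λ_0`, `i = 1, …, N`. -/
noncomputable def Rnorm {N : ℕ} {K : Type*} [NormedField K]
    (f : MvPowerSeries (Fin N) K) : ℝ :=
  ⨆ ν : Fin N →₀ ℕ, ‖f ν‖

/-- Membership in `R`: bounded coefficients. -/
def memR {N : ℕ} {K : Type*} [NormedField K] (f : MvPowerSeries (Fin N) K) : Prop :=
  BddAbove (Set.range fun ν : Fin N →₀ ℕ => ‖f ν‖)

/-- Norm-convergence (in the sup norm of `R`) of a series of elements of `R` to `g`. -/
def HasSumR {ι : Type*} {N : ℕ} {K : Type*} [NormedField K]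
    (f : ι → MvPowerSeries (Fin N) K) (g : MvPowerSeries (Fin N) K) : Prop :=
  Filter.Tendsto (fun s : Finset ι => Rnorm (g - ∑ i ∈ s, f i)) Filter.atTop (nhds 0)

/-- Invertibility in `R`. -/
def invR {N : ℕ} {K : Type*} [NormedField K] (f : MvPowerSeries (Fin N) K) : Prop :=
  memR f ∧ ∃ g : MvPowerSeries (Fin N) K, memR g ∧ f * g = 1

/-- `B_μ(1, y_1, …, y_N)` as a power series (in fact a polynomial) in `y_i = λ_i/λ_0`:
the coefficient of `y^ν` is `b_{ν_0} b_{ν_1} ⋯ b_{ν_N}` where `ν_0 = μ_0 - Σ ν_i`,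
whenever `(ν_0, ν_1, …, ν_N)` is a nonnegative solution of `Σ ν_i â_i = μ`, and `0` otherwise. -/
noncomputable def Bone (p : ℕ) {n N : ℕ} (a : Fin (N + 1) → Fin n → ℤ)
    {K : Type*} [Field K] (π : K) (μ : Fin (n + 1) → ℤ) : MvPowerSeries (Fin N) K :=
  fun ν =>
    if 0 ≤ μ 0 - ∑ i : Fin N, (ν i : ℤ) ∧
        (μ 0 - ∑ i : Fin N, (ν i : ℤ)) • hat (a 0) +
          ∑ i : Fin N, (ν i : ℤ) • hat (a i.succ) = μ then
      dworkB p π (μ 0 - ∑ i : Fin N, (ν i : ℤ)).toNat * ∏ i : Fin N, dworkB p π (ν i)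
    else 0

/-- The substitution `λ_i/λ_0 ↦ λ_i^p/λ_0^p` on `R`, i.e. `ξ(λ) ↦ ξ(λ^p)`. -/
noncomputable def frobR (p : ℕ) {N : ℕ} {K : Type*} [Field K]
    (f : MvPowerSeries (Fin N) K) : MvPowerSeries (Fin N) K :=
  fun ν => if h : ∃ ν' : Fin N →₀ ℕ, p • ν' = ν then f h.choose else 0

/-- The term indexed by `ν ∈ M°` in the series defining `η_ρ`:
`π^{ρ_0-ν_0} B_{pν-ρ}(1, λ_1/λ_0, …, λ_N/λ_0) ξ_ν(λ^p)` when `pν - ρ ∈ M`, else `0`. -/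
noncomputable def etaTerm (p : ℕ) {n N : ℕ} (a : Fin (N + 1) → Fin n → ℤ)
    {K : Type*} [Field K] (π : K)
    (ξ : {μ : Fin (n + 1) → ℤ // μ ∈ latticeMint a} → MvPowerSeries (Fin N) K)
    (ρ : Fin (n + 1) → ℤ) (ν : {μ : Fin (n + 1) → ℤ // μ ∈ latticeMint a}) :
    MvPowerSeries (Fin N) K :=
  if (p : ℤ) • ν.1 - ρ ∈ latticeM a then
    π ^ (ρ 0 - ν.1 0) • (Bone p a π ((p : ℤ) • ν.1 - ρ) * frobR p (ξ ν))
  else 0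


/-- The index type `M°` (as a subtype). -/
abbrev Msub {n N : ℕ} (a : Fin (N + 1) → Fin n → ℤ) : Type _ :=
  {μ : Fin (n + 1) → ℤ // μ ∈ latticeMint a}

/-- Membership in `S`: a family `(ξ_μ)_{μ ∈ M°}` of elements of `R` with uniformly
bounded coefficients. -/
def memS {n N : ℕ} (a : Fin (N + 1) → Fin n → ℤ) {K : Type*} [NormedField K]
    (ξ : {μ : Fin (n + 1) → ℤ // μ ∈ latticeMint a} → MvPowerSeries (Fin N) K) : Prop :=
  BddAbove (Set.range
    fun q : {μ : Fin (n + 1) → ℤ // μ ∈ latticeMint a} × (Fin N →₀ ℕ) => ‖ξ q.1 q.2‖)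

/-- The norm on `S`. -/
noncomputable def Snorm {n N : ℕ} (a : Fin (N + 1) → Fin n → ℤ) {K : Type*} [NormedField K]
    (ξ : {μ : Fin (n + 1) → ℤ // μ ∈ latticeMint a} → MvPowerSeries (Fin N) K) : ℝ :=
  ⨆ μ : {μ : Fin (n + 1) → ℤ // μ ∈ latticeMint a}, Rnorm (ξ μ)

/-- The truncation `Φ_1` of `Φ`, as a function of `λ = (λ_0, …, λ_N)`. -/
noncomputable def Phi1 (p : ℕ) {n N : ℕ} (a : Fin (N + 1) → Fin n → ℤ)
    {K : Type*} [Field K] (lam : Fin (N + 1) → K) : K :=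
  ∑ l ∈ (Fintype.piFinset fun _ : Fin N => Finset.range p).filter
      (fun l => l ∈ LplusSet a ∧ ∑ i : Fin N, l i ≤ p - 1),
    (-1 : K) ^ (∑ i : Fin N, l i) * (Nat.multinomial Finset.univ l : K) *
      ∏ i : Fin N, (lam i.succ / lam 0) ^ l i

/-- The open polydisk `𝒟`. -/
def Dopen {N : ℕ} {K : Type*} [NormedField K] : Set (Fin (N + 1) → K) :=
  {lam | lam 0 ≠ 0 ∧ ∀ i : Fin N, ‖lam i.succ / lam 0‖ < 1}

/-- The region `𝒟_+`. -/
def Dplus (p : ℕ) {n N : ℕ} (a : Fin (N + 1) → Fin n → ℤ) {K : Type*} [NormedField K] :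
    Set (Fin (N + 1) → K) :=
  {lam | lam 0 ≠ 0 ∧ (∀ i : Fin N, ‖lam i.succ / lam 0‖ ≤ 1) ∧ ‖Phi1 p a lam‖ = 1}

/-- `f` is (on `𝒟_+`) a rational function of `λ_1/λ_0, …, λ_N/λ_0` defined at every
point of `𝒟_+`. -/
def RatOnDplus (p : ℕ) {n N : ℕ} (a : Fin (N + 1) → Fin n → ℤ) {K : Type*} [NormedField K]
    (f : (Fin (N + 1) → K) → K) : Prop :=
  ∃ q r : MvPolynomial (Fin N) K,
    (∀ lam ∈ Dplus p a (K := K), MvPolynomial.eval (fun i => lam i.succ / lam 0) r ≠ 0) ∧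
    ∀ lam ∈ Dplus p a (K := K),
      f lam = MvPolynomial.eval (fun i => lam i.succ / lam 0) q /
        MvPolynomial.eval (fun i => lam i.succ / lam 0) r

/-- `F` is a uniform limit on `𝒟_+` of rational functions in the `λ_i/λ_0` defined
at every point of `𝒟_+`. -/
def UnifLimitRat (p : ℕ) {n N : ℕ} (a : Fin (N + 1) → Fin n → ℤ) {K : Type*} [NormedField K]
    (F : (Fin (N + 1) → K) → K) : Prop :=
  ∃ u : ℕ → (Fin (N + 1) → K) → K, (∀ k, RatOnDplus p a (u k)) ∧
    TendstoUniformlyOn u F Filter.atTop (Dplus p a (K := K))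

/-- Membership in `R'`: the power series converges on `𝒟` and its sum extends to an
element of `R'`, i.e. to a uniform limit on `𝒟_+` of rational functions in the `λ_i/λ_0`
defined at every point of `𝒟_+`. -/
def memR' (p : ℕ) {n N : ℕ} (a : Fin (N + 1) → Fin n → ℤ) {K : Type*} [NormedField K]
    (c : MvPowerSeries (Fin N) K) : Prop :=
  ∃ F : (Fin (N + 1) → K) → K, UnifLimitRat p a F ∧
    ∀ lam ∈ Dopen (N := N) (K := K),
      HasSum (fun ν : Fin N →₀ ℕ => c ν * ∏ i : Fin N, (lam i.succ / lam 0) ^ ν i) (F lam)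

/-- Invertibility in `R'`. -/
def invR' (p : ℕ) {n N : ℕ} (a : Fin (N + 1) → Fin n → ℤ) {K : Type*} [NormedField K]
    (f : MvPowerSeries (Fin N) K) : Prop :=
  memR' p a f ∧ ∃ g : MvPowerSeries (Fin N) K, memR' p a g ∧ f * g = 1

/-- Membership in `S'`. -/
def memS' (p : ℕ) {n N : ℕ} (a : Fin (N + 1) → Fin n → ℤ) {K : Type*} [NormedField K]
    (ξ : {μ : Fin (n + 1) → ℤ // μ ∈ latticeMint a} → MvPowerSeries (Fin N) K) : Prop :=
  memS a ξ ∧ ∀ μ, memR' p a (ξ μ)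

/-- Membership in `T`: `ξ ∈ S`, `ξ_{â_0} = 1` and `‖ξ‖ = 1`; the distinguished index
`μ0 ∈ M°` is the point `â_0`. -/
def memT {n N : ℕ} (a : Fin (N + 1) → Fin n → ℤ) {K : Type*} [NormedField K]
    (μ0 : {μ : Fin (n + 1) → ℤ // μ ∈ latticeMint a})
    (ξ : {μ : Fin (n + 1) → ℤ // μ ∈ latticeMint a} → MvPowerSeries (Fin N) K) : Prop :=
  memS a ξ ∧ ξ μ0 = 1 ∧ Snorm a ξ = 1

/-- `ζ` is a value of the map `β` at `ξ`: `ζ = α*(ξ)/η_{â_0}`, where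
`α*(ξ) = (η_ρ)_{ρ ∈ M°}` is given by the norm-convergent series of `etaTerm`s. -/
def isBeta (p : ℕ) {n N : ℕ} (a : Fin (N + 1) → Fin n → ℤ) {K : Type*} [NormedField K] (π : K)
    (μ0 : {μ : Fin (n + 1) → ℤ // μ ∈ latticeMint a})
    (ξ ζ : {μ : Fin (n + 1) → ℤ // μ ∈ latticeMint a} → MvPowerSeries (Fin N) K) : Prop :=
  ∃ η : {μ : Fin (n + 1) → ℤ // μ ∈ latticeMint a} → MvPowerSeries (Fin N) K,
    (∀ ρ, HasSumR (etaTerm p a π ξ ρ.1) (η ρ)) ∧ ∀ ρ, ζ ρ = η ρ * (η μ0)⁻¹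

/-- The coefficients `ξ_ρ` (Eq. (3.4) of the paper) of
`ξ(λ,x) = γ°(G(λ_0,x) ∏_{i=1}^N exp(πλ_i x^{â_i}))`:
`ξ_ρ = Σ (-1)^{ρ_0-1+Σl_i} (ρ_0-1+Σl_i)!/(l_1!⋯l_N!) ∏ (λ_i/λ_0)^{l_i}`, summed over
`(l_1,…,l_N) ∈ ℤ_{≥0}^N` such that `l_0 := ρ_0-1+Σl_i ≥ 0` and
`Σ l_i â_i - (l_0+1) â_0 = -ρ`. -/
noncomputable def xiRho {n N : ℕ} (a : Fin (N + 1) → Fin n → ℤ) (K : Type*) [Field K]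
    (ρ : Fin (n + 1) → ℤ) : MvPowerSeries (Fin N) K :=
  fun l =>
    if 0 ≤ ρ 0 - 1 + ∑ i : Fin N, (l i : ℤ) ∧
        (∑ i : Fin N, (l i : ℤ) • hat (a i.succ)) -
          (ρ 0 + ∑ i : Fin N, (l i : ℤ)) • hat (a 0) = -ρ then
      (-1 : K) ^ (ρ 0 - 1 + ∑ i : Fin N, (l i : ℤ)) *
        ((ρ 0 - 1 + ∑ i : Fin N, (l i : ℤ)).toNat.factorial : K) /
        ((∏ i : Fin N, (l i).factorial : ℕ) : K)
    else 0

/-- The series `Φ`, as a formal power series in the variables `λ_i/λ_0`. -/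
noncomputable def PhiSeries {n N : ℕ} (a : Fin (N + 1) → Fin n → ℤ) (K : Type*) [Field K] :
    MvPowerSeries (Fin N) K :=
  fun l =>
    if (fun i => l i) ∈ LplusSet a then
      (-1 : K) ^ (∑ i : Fin N, l i) * (Nat.multinomial Finset.univ l : K)
    else 0

/-- The truncation `Φ_1` of `Φ`, as a formal power series in the variables `λ_i/λ_0`. -/
noncomputable def Phi1Series (p : ℕ) {n N : ℕ} (a : Fin (N + 1) → Fin n → ℤ)
    (K : Type*) [Field K] : MvPowerSeries (Fin N) K :=
  fun l =>
    if (fun i => l i) ∈ LplusSet a ∧ ∑ i : Fin N, l i ≤ p - 1 then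
      (-1 : K) ^ (∑ i : Fin N, l i) * (Nat.multinomial Finset.univ l : K)
    else 0

/-- `B_μ(λ_0, …, λ_N)` as a function of `λ` (a finite sum; `finsum` junk value `0`
is irrelevant since the relevant index set is finite). -/
noncomputable def Bfull (p : ℕ) {n N : ℕ} (a : Fin (N + 1) → Fin n → ℤ)
    {K : Type*} [Field K] (π : K) (μ : Fin (n + 1) → ℤ) (lam : Fin (N + 1) → K) : K :=
  finsum fun ν : Fin (N + 1) → ℕ =>
    if ∑ j, ν j • hat (a j) = μ then
      (∏ j, dworkB p π (ν j)) * ∏ j, lam j ^ ν j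
    else 0

end AHG

open scoped BigOperators Classical

/-!
Since `π ^ (p - 1) = -p`, rescaling turns `θ (t)` into `exp (x + x ^ p / p)` with `x = π t`, so
`b_n = π ^ n T_n / n!`, where `T_n` counts the permutations `σ` of `n` letters with `σ ^ p = 1`. The
recurrence for `T_n`, read modulo powers of `p` by Wilson's theorem, shows that `T_n` is divisible
by `p ^ ⌈⌊n / p⌋ / 2⌉`. For odd `p` this yields `ord b_n ≥ n / (p - 1) - max (⌊n / p⌋ - 1, 0)`, and
the same bound with `n` replaced by `μ_0` for the coefficients of `B_μ`.

If `ν ∈ M°` has height `ν_0 = 1` and its point `v` were not interior to `Δ`, a hyperplane supporting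
`Δ` at `v` would give a proper face of `C` containing `ν`; so `v` is the unique interior lattice
point and `ν = â_0`. Hence every other `ν ∈ M°` has `ν_0 ≥ 2`, and then the coefficients of
`π ^ (ρ_0 - ν_0) B_{pν - ρ}` have norm at most `p⁻²`. The ultrametric inequality gives the theorem
with `C = 1 / p`.
-/

namespace AHG

/-! ### Permutations of order dividing `p` -/

/-- The number of permutations `σ` of `n` letters with `σ ^ p = 1`, for `p` prime. It is encoded by
its recurrence: the last of `n + 1` letters is either fixed or lies in one of the
`n (n - 1) ⋯ (n - p + 2)` possible `p`-cycles. Its exponential generating function is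
`exp (x + x ^ p / p)`, which is `θ (x / π)`. -/
def permRootCount (p : ℕ) : ℕ → ℕ
  | 0 => 1
  | n + 1 => permRootCount p n + n.descFactorial (p - 1) * permRootCount p (n - (p - 1))

section Divisibility

variable {p : ℕ} [Fact p.Prime]

theorem natCast_zmod_descFactorial_pred (n : ℕ) :
    (n.descFactorial (p - 1) : ZMod p) = if p ∣ n + 1 then -1 else 0 := by
  have hp : p.Prime := Fact.out
  have hpred : p - 1 < p := Nat.sub_lt hp.pos one_pos
  have lucas : (n.choose (p - 1) : ZMod p) = (n % p).choose (p - 1) := by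
    have h := (ZMod.natCast_eq_natCast_iff _ _ _).2
      (Choose.choose_modEq_choose_mod_mul_choose_div_nat (p := p) (n := n) (k := p - 1))
    rwa [Nat.mod_eq_of_lt hpred, Nat.div_eq_of_lt hpred, Nat.choose_zero_right,
      mul_one] at h
  rw [Nat.descFactorial_eq_factorial_mul_choose, Nat.cast_mul, ZMod.wilsons_lemma, lucas]
  have hlt := Nat.mod_lt n hp.pos
  have hmod : p ∣ n + 1 ↔ n % p = p - 1 := by
    rw [Nat.dvd_iff_mod_eq_zero, Nat.add_mod, Nat.mod_eq_of_lt hp.one_lt]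
    rcases (Nat.succ_le_of_lt hlt).lt_or_eq with h | h
    · rw [Nat.mod_eq_of_lt h]; omega
    · rw [show n % p + 1 = p from h, Nat.mod_self]; omega
  split_ifs with h
  · simp [hmod.1 h]
  · simp [Nat.choose_eq_zero_of_lt (show n % p < p - 1 by rw [hmod] at h; omega)]

theorem permRootCount_succ_modEq {n e : ℕ} (hn : ¬ p ∣ n + 1)
    (he : p ^ e ∣ permRootCount p (n - (p - 1))) :
    permRootCount p (n + 1) ≡ permRootCount p n [MOD p ^ (e + 1)] := by
  have hdvd : p ∣ n.descFactorial (p - 1) := by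
    rw [← ZMod.natCast_eq_zero_iff, natCast_zmod_descFactorial_pred, if_neg hn]
  rw [permRootCount, pow_succ']
  simpa using (Nat.modEq_zero_iff_dvd.2 (mul_dvd_mul hdvd he)).add_left (permRootCount p n)

theorem permRootCount_succ_add_modEq {n e : ℕ} (hn : p ∣ n + 1)
    (he : p ^ e ∣ permRootCount p (n - (p - 1))) :
    permRootCount p (n + 1) + permRootCount p (n - (p - 1)) ≡ permRootCount p n
      [MOD p ^ (e + 1)] := by
  have hdvd : p ∣ n.descFactorial (p - 1) + 1 := by
    rw [← ZMod.natCast_eq_zero_iff, Nat.cast_add, natCast_zmod_descFactorial_pred, if_pos hn]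
    simp
  rw [permRootCount, add_assoc, ← Nat.succ_mul, pow_succ']
  simpa using (Nat.modEq_zero_iff_dvd.2 (mul_dvd_mul hdvd he)).add_left (permRootCount p n)

theorem permRootCount_mul_add_modEq {q : ℕ}
    (h : ∀ m < p * q, p ^ ((m / p + 1) / 2) ∣ permRootCount p m) {r : ℕ} (hr : r < p) :
    permRootCount p (p * q + r) ≡ permRootCount p (p * q) [MOD p ^ (q / 2 + 1)] := by
  induction r with
  | zero => rfl
  | succ r ih =>
    refine (permRootCount_succ_modEq (n := p * q + r) ?_ ?_).trans (ih (by omega))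
    · rw [add_assoc, Nat.dvd_add_right (dvd_mul_right p q)]
      exact Nat.not_dvd_of_pos_of_lt r.succ_pos hr
    · rcases q with - | q
      · simp
      · have hm : p * (q + 1) + r - (p - 1) = p * q + (r + 1) := by rw [mul_add]; omega
        have hdiv : (p * q + (r + 1)) / p = q := by
          rw [Nat.mul_add_div (by omega), Nat.div_eq_of_lt hr, add_zero]
        rw [hm]
        simpa only [hdiv] using h (p * q + (r + 1)) (by rw [mul_add]; omega)

/- Passing from one block `[p q, p q + p)` of arguments to the next, the top coefficient
`n (n - 1) ⋯ (n - p + 2) ≡ -1` cancels the previous leading value modulo `p`. This gains one factor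
`p` over every two blocks. -/
theorem pow_dvd_permRootCount_mul {q : ℕ}
    (h : ∀ m < p * q, p ^ ((m / p + 1) / 2) ∣ permRootCount p m) :
    p ^ ((q + 1) / 2) ∣ permRootCount p (p * q) := by
  have hp : 0 < p := (Fact.out : p.Prime).pos
  rcases q with - | q
  · simp
  have hlast : p * q + (p - 1) + 1 = p * (q + 1) := by rw [mul_add]; omega
  have hfirst : p ^ (q / 2) ∣ permRootCount p (p * q + (p - 1) - (p - 1)) := by
    have hdvd := h (p * q) (Nat.mul_lt_mul_of_pos_left q.lt_succ_self hp)
    rw [Nat.mul_div_cancel_left _ hp] at hdvd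
    rw [Nat.add_sub_cancel]
    exact (pow_dvd_pow p (by omega)).trans hdvd
  have hnext := permRootCount_succ_add_modEq (hlast ▸ dvd_mul_right p (q + 1)) hfirst
  have hblock : permRootCount p (p * q + (p - 1)) ≡ permRootCount p (p * q)
      [MOD p ^ (q / 2 + 1)] :=
    permRootCount_mul_add_modEq
      (fun m hm => h m (hm.trans_le (Nat.mul_le_mul_left p q.le_succ))) (Nat.sub_lt hp one_pos)
  rw [hlast, Nat.add_sub_cancel] at hnext
  have hzero : permRootCount p (p * (q + 1)) ≡ 0 [MOD p ^ (q / 2 + 1)] :=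
    Nat.ModEq.add_right_cancel' _ ((hnext.trans hblock).trans (by rw [zero_add]))
  rw [show (q + 1 + 1) / 2 = q / 2 + 1 by omega]
  exact Nat.modEq_zero_iff_dvd.1 hzero

theorem pow_dvd_permRootCount (n : ℕ) : p ^ ((n / p + 1) / 2) ∣ permRootCount p n := by
  have hp : 0 < p := (Fact.out : p.Prime).pos
  suffices block : ∀ q, ∀ m < p * q, p ^ ((m / p + 1) / 2) ∣ permRootCount p m from
    block (n + 1) n (lt_of_lt_of_le n.lt_succ_self (Nat.le_mul_of_pos_left _ hp))
  intro q
  induction q with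
  | zero => simp
  | succ q ih =>
    intro m hm
    rcases lt_or_ge m (p * q) with hlt | hge
    · exact ih m hlt
    obtain ⟨r, rfl⟩ := Nat.exists_eq_add_of_le hge
    have hr : r < p := by rw [mul_add] at hm; omega
    rw [Nat.mul_add_div hp, Nat.div_eq_of_lt hr, add_zero]
    have hmod := (permRootCount_mul_add_modEq ih hr).of_dvd
      (pow_dvd_pow p (show (q + 1) / 2 ≤ q / 2 + 1 by omega))
    exact (hmod.dvd_iff dvd_rfl).2 (pow_dvd_permRootCount_mul ih)

theorem padicValNat_factorial_le_of_ne_two (hp2 : p ≠ 2) (n : ℕ) :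
    padicValNat p n.factorial ≤ n / p - 1 + (n / p + 1) / 2 := by
  have hp : p.Prime := Fact.out
  rw [← padicValNat_mul_div_factorial, padicValNat_factorial_mul]
  rcases eq_or_ne (n / p) 0 with hq | hq
  · simp [hq]
  have hlt := sub_one_mul_padicValNat_factorial_lt_of_ne_zero p hq
  have htwo : 2 * padicValNat p (n / p).factorial ≤ (p - 1) * padicValNat p (n / p).factorial :=
    Nat.mul_le_mul_right _ (by have := hp.two_le; omega)
  omega

theorem norm_permRootCount_div_factorial_le (hp2 : p ≠ 2) (n : ℕ) :
    ‖(permRootCount p n / n.factorial : ℚ_[p])‖ ≤ (p : ℝ) ^ (n / p - 1) := by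
  have hp : (1 : ℝ) < p := mod_cast (Fact.out : p.Prime).one_lt
  have hnum : ‖(permRootCount p n : ℚ_[p])‖ ≤ (p : ℝ) ^ (-((n / p + 1) / 2 : ℕ) : ℤ) := by
    have h := (Padic.norm_int_le_pow_iff_dvd (p := p) (permRootCount p n) ((n / p + 1) / 2)).2
      (mod_cast pow_dvd_permRootCount n)
    rwa [Int.cast_natCast] at h
  have hden : ‖(n.factorial : ℚ_[p])‖ = (p : ℝ) ^ (-padicValNat p n.factorial : ℤ) := by
    rw [Padic.norm_eq_zpow_neg_valuation (mod_cast n.factorial_ne_zero), Padic.valuation_natCast]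
  rw [norm_div, hden, div_le_iff₀ (by positivity), ← zpow_natCast,
    ← zpow_add₀ (by positivity)]
  refine hnum.trans (zpow_le_zpow_right₀ hp.le ?_)
  have := padicValNat_factorial_le_of_ne_two hp2 n
  omega

end Divisibility

/-! ### The Dwork coefficients -/

section DworkCoefficients

variable {K : Type*} [Field K] (p : ℕ) (π : K)

/-- The contribution of the term of degree `p k` of `exp (-π t ^ p)` to the `n`-th coefficient of
`θ (t) = exp (π t) exp (-π t ^ p)`; it is `0` if `n < p k`. -/
noncomputable def dworkTerm (n k : ℕ) : K :=
  if p * k ≤ n then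
    ((-1 : K) ^ k * π ^ (n - p * k + k)) / (((n - p * k).factorial : K) * (k.factorial : K))
  else 0

variable {p}

theorem dworkB_eq_sum_dworkTerm (hp : 0 < p) {n m : ℕ} (hnm : n < m) :
    dworkB p π n = ∑ k ∈ Finset.range m, dworkTerm p π n k := by
  refine Finset.sum_subset (Finset.range_subset_range.2 hnm) fun k _ hk => if_neg ?_
  have := Nat.le_mul_of_pos_left k hp
  rw [Finset.mem_range] at hk
  omega

variable [CharZero K]

theorem succ_mul_dworkTerm_zero (n : ℕ) :
    (n + 1 : K) * dworkTerm p π (n + 1) 0 = π * dworkTerm p π n 0 := by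
  have hn : (n + 1 : K) ≠ 0 := n.cast_add_one_ne_zero
  have hf : (n.factorial : K) ≠ 0 := mod_cast n.factorial_ne_zero
  simp only [dworkTerm, mul_zero, Nat.zero_le, if_true, Nat.sub_zero, Nat.factorial_succ]
  push_cast
  field_simp
  ring

theorem succ_mul_dworkTerm_succ (hp : 0 < p) (n k : ℕ) :
    (n + 1 : K) * dworkTerm p π (n + 1) (k + 1) = π * dworkTerm p π n (k + 1) -
      if p - 1 ≤ n then p * π * dworkTerm p π (n - (p - 1)) k else 0 := by
  have hk : (k + 1 : K) ≠ 0 := k.cast_add_one_ne_zero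
  have hkf : (k.factorial : K) ≠ 0 := mod_cast k.factorial_ne_zero
  have hmul : p * (k + 1) = p * k + p := mul_add_one p k
  rcases lt_trichotomy (n + 1) (p * (k + 1)) with hlt | heq | hgt
  · simp only [dworkTerm, hlt.not_ge, show ¬ p * (k + 1) ≤ n by omega, if_false, mul_zero]
    split_ifs
    · omega
    all_goals simp
  · have hcast : (n + 1 : K) = p * (k + 1) := mod_cast heq
    simp only [dworkTerm, if_true, show ¬ p * (k + 1) ≤ n by omega, if_false,
      show p - 1 ≤ n by omega, show n - (p - 1) = p * k by omega, le_refl, heq, Nat.sub_self,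
      Nat.factorial_succ, hcast]
    push_cast
    field_simp
    ring
  · obtain ⟨j, hj⟩ := Nat.exists_eq_add_of_le (show p * (k + 1) ≤ n by omega)
    have hcast : (n + 1 : K) = p * (k + 1) + (j + 1) := mod_cast congrArg (· + 1) hj
    have hj1 : (j + 1 : K) ≠ 0 := j.cast_add_one_ne_zero
    have hjf : (j.factorial : K) ≠ 0 := mod_cast j.factorial_ne_zero
    simp only [dworkTerm, show p * (k + 1) ≤ n + 1 by omega, show p * (k + 1) ≤ n by omega,
      show p - 1 ≤ n by omega, show p * k ≤ n - (p - 1) by omega, if_true,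
      show n + 1 - p * (k + 1) = j + 1 by omega, show n - p * (k + 1) = j by omega,
      show n - (p - 1) - p * k = j + 1 by omega, Nat.factorial_succ, hcast]
    push_cast
    field_simp
    ring

/- The coefficient form of the differential equation `θ' = π (1 - p t ^ (p - 1)) θ`. -/
theorem succ_mul_dworkB_succ (hp : 0 < p) (n : ℕ) :
    (n + 1 : K) * dworkB p π (n + 1) =
      π * dworkB p π n - if p - 1 ≤ n then p * π * dworkB p π (n - (p - 1)) else 0 := by
  rw [dworkB_eq_sum_dworkTerm π hp (n + 1).lt_succ_self,
    dworkB_eq_sum_dworkTerm π hp (show n < n + 1 + 1 by omega),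
    dworkB_eq_sum_dworkTerm π hp (show n - (p - 1) < n + 1 by omega),
    Finset.sum_range_succ' _ (n + 1), Finset.sum_range_succ' _ (n + 1), mul_add, mul_add,
    Finset.mul_sum, succ_mul_dworkTerm_zero]
  simp only [succ_mul_dworkTerm_succ π hp, Finset.sum_sub_distrib]
  split_ifs
  · simp only [← Finset.mul_sum]
    ring
  · simp only [← Finset.mul_sum, Finset.sum_const_zero]
    ring

variable {π}

theorem dworkB_eq_pow_mul_permRootCount_div (hp : 0 < p) (hπ : π ^ (p - 1) = -(p : K)) (n : ℕ) :
    dworkB p π n = π ^ n * (permRootCount p n / n.factorial) := by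
  have hfac (m : ℕ) : (m.factorial : K) ≠ 0 := mod_cast m.factorial_ne_zero
  induction n using Nat.strong_induction_on with
  | _ n ih =>
    rcases n with - | n
    · simp [dworkB, permRootCount]
    refine mul_left_cancel₀ (n.cast_add_one_ne_zero (R := K)) ?_
    rw [succ_mul_dworkB_succ π hp, ih n n.lt_succ_self, permRootCount, Nat.factorial_succ]
    have hn1 : (n + 1 : K) ≠ 0 := n.cast_add_one_ne_zero
    split_ifs with hn
    · have hdesc : (n.factorial : K) = (n - (p - 1)).factorial * n.descFactorial (p - 1) :=
        mod_cast (Nat.factorial_mul_descFactorial hn).symm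
      have hpow : π ^ (n + 1) = -(p : K) * π * π ^ (n - (p - 1)) := by
        rw [← hπ, ← pow_succ, ← pow_add]
        congr 1
        omega
      have hdesc0 : (n.descFactorial (p - 1) : K) ≠ 0 := right_ne_zero_of_mul (hdesc ▸ hfac n)
      have hsub := hfac (n - (p - 1))
      rw [ih _ (by omega)]
      push_cast
      rw [mul_div_assoc', mul_div_assoc', mul_left_comm, hdesc]
      field_simp
      linear_combination (-(n.descFactorial (p - 1) : K) * permRootCount p (n - (p - 1))) * hpow
    · rw [Nat.descFactorial_of_lt (not_le.1 hn)]
      have := hfac n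
      push_cast
      field_simp
      ring

end DworkCoefficients

section Norm

variable {p : ℕ} [Fact p.Prime] {K : Type*} [NormedField K] [NormedAlgebra ℚ_[p] K] {π : K}

theorem norm_pow_pred_eq_inv (hπ : π ^ (p - 1) = -(p : K)) : ‖π‖ ^ (p - 1) = (p : ℝ)⁻¹ := by
  rw [← norm_pow, hπ, norm_neg, ← map_natCast (algebraMap ℚ_[p] K), norm_algebraMap',
    Padic.norm_p]

theorem norm_dworkB_le (hp2 : p ≠ 2) (hπ : π ^ (p - 1) = -(p : K)) (n : ℕ) :
    ‖dworkB p π n‖ ≤ ‖π‖ ^ n * (p : ℝ) ^ (n / p - 1) := by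
  have : CharZero K := charZero_of_injective_algebraMap (algebraMap ℚ_[p] K).injective
  have hcast : (permRootCount p n / n.factorial : K) =
      algebraMap ℚ_[p] K (permRootCount p n / n.factorial) := by simp
  rw [dworkB_eq_pow_mul_permRootCount_div (Fact.out : p.Prime).pos hπ, hcast, norm_mul, norm_pow,
    norm_algebraMap']
  gcongr
  exact norm_permRootCount_div_factorial_le hp2 n

theorem norm_prod_dworkB_le (hp2 : p ≠ 2) (hπ : π ^ (p - 1) = -(p : K)) {ι : Type*}
    (s : Finset ι) (f : ι → ℕ) :
    ‖∏ i ∈ s, dworkB p π (f i)‖ ≤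
      ‖π‖ ^ (∑ i ∈ s, f i) * (p : ℝ) ^ ((∑ i ∈ s, f i) / p - 1) := by
  have hp : (1 : ℝ) ≤ p := mod_cast (Fact.out : p.Prime).one_le
  induction s using Finset.cons_induction with
  | empty => simp
  | cons i s hi ih =>
    rw [Finset.prod_cons, Finset.sum_cons, norm_mul]
    generalize ∑ j ∈ s, f j = m at ih ⊢
    have hexp : f i / p - 1 + (m / p - 1) ≤ (f i + m) / p - 1 := by
      have hdiv : f i / p + m / p ≤ (f i + m) / p := Nat.div_add_div_le_add_div
      generalize f i / p = q, m / p = r, (f i + m) / p = t at hdiv ⊢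
      omega
    calc ‖dworkB p π (f i)‖ * ‖∏ j ∈ s, dworkB p π (f j)‖
        ≤ (‖π‖ ^ f i * (p : ℝ) ^ (f i / p - 1)) * (‖π‖ ^ m * (p : ℝ) ^ (m / p - 1)) := by
          gcongr
          exact norm_dworkB_le hp2 hπ (f i)
      _ = ‖π‖ ^ (f i + m) * (p : ℝ) ^ (f i / p - 1 + (m / p - 1)) := by ring
      _ ≤ ‖π‖ ^ (f i + m) * (p : ℝ) ^ ((f i + m) / p - 1) := by gcongr

variable {n N : ℕ} (a : Fin (N + 1) → Fin n → ℤ)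

theorem norm_Bone_le (hp2 : p ≠ 2) (hπ : π ^ (p - 1) = -(p : K)) (μ : Fin (n + 1) → ℤ)
    (κ : Fin N →₀ ℕ) :
    ‖Bone p a π μ κ‖ ≤ ‖π‖ ^ (μ 0) * (p : ℝ) ^ ((μ 0).toNat / p - 1) := by
  unfold Bone
  split_ifs with h
  · obtain ⟨κ₀, hκ₀⟩ := Int.eq_ofNat_of_zero_le h.1
    let f : Fin (N + 1) → ℕ := Fin.cons κ₀ κ
    have hsum : μ 0 = (∑ j, f j : ℕ) := by
      rw [Fin.sum_univ_succ]
      simp only [f, Fin.cons_zero, Fin.cons_succ]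
      push_cast
      linarith
    have hprod := norm_prod_dworkB_le hp2 hπ Finset.univ f
    rw [Fin.prod_univ_succ] at hprod
    rw [hκ₀, hsum, zpow_natCast]
    exact hprod
  · rw [norm_zero]
    positivity

theorem norm_zpow_mul_Bone_le (hp2 : p ≠ 2) (hπ : π ^ (p - 1) = -(p : K))
    {ν ρ : Fin (n + 1) → ℤ} (hν : 2 ≤ ν 0) (hρ : 1 ≤ ρ 0) (κ : Fin N →₀ ℕ) :
    ‖π ^ (ρ 0 - ν 0) * Bone p a π ((p : ℤ) • ν - ρ) κ‖ ≤ (p : ℝ)⁻¹ * (p : ℝ)⁻¹ := by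
  have hp : p.Prime := Fact.out
  have hp1 : (1 : ℝ) ≤ p := mod_cast hp.one_le
  have hpow := norm_pow_pred_eq_inv hπ
  have hπ0 : ‖π‖ ≠ 0 := by
    intro h
    rw [h, zero_pow (Nat.sub_pos_of_lt hp.one_lt).ne'] at hpow
    exact (inv_pos.2 (zero_lt_one.trans_le hp1)).ne hpow
  obtain ⟨m, hm⟩ := Int.eq_ofNat_of_zero_le (show 0 ≤ ν 0 by omega)
  have hheight : ((p : ℤ) • ν - ρ) 0 = p * m - ρ 0 := by simp [hm]
  set e := (p * m - ρ 0).toNat / p - 1 with he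
  have hem : e + 2 ≤ m := by
    have hlt : (p * m - ρ 0).toNat / p < m := by
      have : 0 < p * m := Nat.mul_pos hp.pos (by omega)
      exact Nat.div_lt_of_lt_mul (by zify at *; omega)
    omega
  have hexp : ‖π‖ ^ (ρ 0 - m) * ‖π‖ ^ (p * m - ρ 0) = (p : ℝ)⁻¹ ^ m := by
    rw [← zpow_add₀ hπ0, ← hpow, ← pow_mul, ← zpow_natCast]
    congr 1
    push_cast [Nat.cast_sub hp.one_le]
    ring
  calc ‖π ^ (ρ 0 - ν 0) * Bone p a π ((p : ℤ) • ν - ρ) κ‖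
      ≤ ‖π‖ ^ (ρ 0 - m) * (‖π‖ ^ (p * m - ρ 0) * (p : ℝ) ^ e) := by
        rw [norm_mul, norm_zpow, hm]
        gcongr
        simpa only [hheight] using norm_Bone_le a hp2 hπ ((p : ℤ) • ν - ρ) κ
    _ = (p : ℝ)⁻¹ ^ m * (p : ℝ) ^ e := by rw [← mul_assoc, hexp]
    _ ≤ (p : ℝ)⁻¹ ^ (e + 2) * (p : ℝ) ^ e := by
        gcongr ?_ * _
        exact pow_le_pow_of_le_one (by positivity) (inv_le_one_of_one_le₀ hp1) hem
    _ = (p : ℝ)⁻¹ * (p : ℝ)⁻¹ := by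
        rw [pow_add, mul_right_comm, ← mul_pow, inv_mul_cancel₀ (by positivity), one_pow, one_mul,
          sq]

end Norm

/-! ### Points of `M°` of height one -/

section Cone

variable {n N : ℕ} {a : Fin (N + 1) → Fin n → ℤ}

theorem hat_mem_cone (a : Fin (N + 1) → Fin n → ℤ) (j : Fin (N + 1)) :
    (fun i => (hat (a j) i : ℝ)) ∈ cone a :=
  ⟨Pi.single j 1, Pi.single_nonneg (α := fun _ => ℝ).2 zero_le_one, by simp [Pi.single_apply]⟩

theorem nonneg_of_mem_cone {ℓ : (Fin (n + 1) → ℝ) →ₗ[ℝ] ℝ}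
    (hℓ : ∀ j, 0 ≤ ℓ fun i => (hat (a j) i : ℝ)) : ∀ x ∈ cone a, 0 ≤ ℓ x := by
  rintro x ⟨t, ht, rfl⟩
  simp only [map_sum, map_smul]
  exact Finset.sum_nonneg fun j _ => mul_nonneg (ht j) (hℓ j)

theorem exists_linearMap_apply_hat (f : (Fin n → ℝ) →ₗ[ℝ] ℝ) (c : ℝ) :
    ∃ ℓ : (Fin (n + 1) → ℝ) →ₗ[ℝ] ℝ, ∀ v : Fin n → ℤ,
      ℓ (fun i => (hat v i : ℝ)) = c - f fun i => (v i : ℝ) := by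
  refine ⟨c • LinearMap.proj 0 - f ∘ₗ LinearMap.funLeft ℝ ℝ Fin.succ, fun v => ?_⟩
  have htail : LinearMap.funLeft ℝ ℝ Fin.succ (fun i => (hat v i : ℝ)) = fun i => (v i : ℝ) := by
    funext i
    simp [LinearMap.funLeft, hat]
  simp only [LinearMap.sub_apply, LinearMap.comp_apply, htail]
  simp [hat]

theorem one_le_of_mem_latticeMint {μ : Fin (n + 1) → ℤ} (hμ : μ ∈ latticeMint a) : 1 ≤ μ 0 := by
  let height : (Fin (n + 1) → ℝ) →ₗ[ℝ] ℝ := LinearMap.proj 0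
  have hone (j) : height (fun i => (hat (a j) i : ℝ)) = 1 := by simp [height, hat]
  have hnonneg := nonneg_of_mem_cone (ℓ := height) fun j => (hone j).symm ▸ zero_le_one
  have hμ0 : 0 ≤ μ 0 := Int.cast_nonneg_iff.1 (hnonneg _ hμ.1.1)
  refine lt_of_le_of_ne hμ0 fun h => ?_
  have hzero := hμ.2 height hnonneg (by simp [height, ← h]) _ (hat_mem_cone a 0)
  rw [hone] at hzero
  exact one_ne_zero hzero

theorem mem_interior_of_hat_mem_latticeMint
    (ha : (fun i => (a 0 i : ℝ)) ∈
      interior (convexHull ℝ (Set.range fun j : Fin N => fun i => (a j.succ i : ℝ))))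
    {v : Fin n → ℤ} (hv : hat v ∈ latticeMint a) :
    (fun i => (v i : ℝ)) ∈
      interior (convexHull ℝ (Set.range fun j : Fin N => fun i => (a j.succ i : ℝ))) := by
  set Δ := convexHull ℝ (Set.range fun j : Fin N => fun i => (a j.succ i : ℝ))
  by_contra hvΔ
  obtain ⟨f, hf0, hf⟩ := geometric_hahn_banach_of_nonempty_interior_point
    (convex_convexHull ℝ _) hvΔ ⟨_, ha⟩
  have hlt : f (fun i => (a 0 i : ℝ)) < f fun i => (v i : ℝ) := by
    have himage : f '' interior Δ ⊆ interior (Set.Iic (f fun i => (v i : ℝ))) :=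
      interior_maximal (Set.image_subset_iff.2 fun x hx => hf x (interior_subset hx))
        (f.isOpenMap_of_ne_zero hf0 _ isOpen_interior)
    rw [interior_Iic] at himage
    exact himage (Set.mem_image_of_mem f ha)
  obtain ⟨ℓ, hℓ⟩ := exists_linearMap_apply_hat (f : (Fin n → ℝ) →ₗ[ℝ] ℝ) (f fun i => (v i : ℝ))
  have hnonneg : ∀ x ∈ cone a, 0 ≤ ℓ x := nonneg_of_mem_cone <| Fin.cases
    (by rw [hℓ]; exact sub_nonneg.2 hlt.le)
    fun j => by rw [hℓ]; exact sub_nonneg.2 (hf _ (subset_convexHull ℝ _ ⟨j, rfl⟩))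
  have hzero := hv.2 ℓ hnonneg ((hℓ v).trans (sub_self _)) _ (hat_mem_cone a 0)
  rw [hℓ] at hzero
  exact (sub_pos.2 hlt).ne' hzero

theorem eq_hat_of_mem_latticeMint (ha : uniqueInteriorPoint a) {μ : Fin (n + 1) → ℤ}
    (hμ : μ ∈ latticeMint a) (h1 : μ 0 = 1) : μ = hat (a 0) := by
  have hhat : hat (Fin.tail μ) = μ := by rw [hat, ← h1, Fin.cons_self_tail]
  rw [← hhat] at hμ ⊢
  rw [ha.2 _ (mem_interior_of_hat_mem_latticeMint ha.1 hμ)]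

theorem two_le_of_mem_latticeMint (ha : uniqueInteriorPoint a) {μ : Fin (n + 1) → ℤ}
    (hμ : μ ∈ latticeMint a) (hne : μ ≠ hat (a 0)) : 2 ≤ μ 0 :=
  lt_of_le_of_ne (one_le_of_mem_latticeMint hμ) fun h =>
    hne (eq_hat_of_mem_latticeMint ha hμ h.symm)

end Cone

/-! ### Coefficientwise estimates -/

section SupNorm

variable {n N : ℕ} {K : Type*} [NormedField K]

theorem Snorm_nonneg (a : Fin (N + 1) → Fin n → ℤ) (ξ : Msub a → MvPowerSeries (Fin N) K) :
    0 ≤ Snorm a ξ :=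
  Real.iSup_nonneg fun _ => Real.iSup_nonneg fun _ => norm_nonneg _

variable {a : Fin (N + 1) → Fin n → ℤ} {ξ : Msub a → MvPowerSeries (Fin N) K}

theorem norm_le_Rnorm {f : MvPowerSeries (Fin N) K} (hf : memR f) (κ : Fin N →₀ ℕ) :
    ‖f κ‖ ≤ Rnorm f :=
  le_ciSup hf κ

theorem memS.memR (hξ : memS a ξ) (ν : Msub a) : memR (ξ ν) :=
  BddAbove.mono (Set.range_subset_iff.2 fun κ => Set.mem_range_self (ν, κ)) hξ

theorem norm_le_Snorm (hξ : memS a ξ) (ν : Msub a) (κ : Fin N →₀ ℕ) : ‖ξ ν κ‖ ≤ Snorm a ξ := by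
  have hRnorm : BddAbove (Set.range fun ν => Rnorm (ξ ν)) := by
    obtain ⟨b, hb⟩ := hξ
    exact ⟨b, Set.forall_mem_range.2 fun ν => ciSup_le fun κ => hb (Set.mem_range_self (ν, κ))⟩
  exact (norm_le_Rnorm (hξ.memR ν) κ).trans (le_ciSup hRnorm ν)

theorem Snorm_le {B : ℝ} (hB : 0 ≤ B) (h : ∀ ν κ, ‖ξ ν κ‖ ≤ B) : Snorm a ξ ≤ B :=
  Real.iSup_le (fun ν => Real.iSup_le (h ν) hB) hB

theorem norm_frobR_le (p : ℕ) {f : MvPowerSeries (Fin N) K} {B : ℝ} (hB : 0 ≤ B)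
    (hf : ∀ κ, ‖f κ‖ ≤ B) (κ : Fin N →₀ ℕ) : ‖frobR p f κ‖ ≤ B := by
  unfold frobR
  split_ifs
  · exact hf _
  · rwa [norm_zero]

variable [IsUltrametricDist K]

theorem norm_mul_apply_le {f g : MvPowerSeries (Fin N) K} {A B : ℝ} (hA : 0 ≤ A) (hB : 0 ≤ B)
    (hf : ∀ κ, ‖f κ‖ ≤ A) (hg : ∀ κ, ‖g κ‖ ≤ B) (κ : Fin N →₀ ℕ) : ‖(f * g) κ‖ ≤ A * B := by
  change ‖MvPowerSeries.coeff κ (f * g)‖ ≤ A * B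
  rw [MvPowerSeries.coeff_mul]
  refine IsUltrametricDist.norm_sum_le_of_forall_le_of_nonneg (mul_nonneg hA hB) fun q _ => ?_
  rw [norm_mul]
  exact mul_le_mul (hf q.1) (hg q.2) (norm_nonneg _) hA

theorem norm_le_of_hasSumR {ι : Type*} {f : ι → MvPowerSeries (Fin N) K}
    {g : MvPowerSeries (Fin N) K} (hg : memR g) (h : HasSumR f g) {B : ℝ} (hB : 0 ≤ B)
    (hf : ∀ i κ, ‖f i κ‖ ≤ B) (κ : Fin N →₀ ℕ) : ‖g κ‖ ≤ B := by
  have hsum (s : Finset ι) (κ) : ‖(∑ i ∈ s, f i) κ‖ ≤ B := by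
    change ‖MvPowerSeries.coeff κ (∑ i ∈ s, f i)‖ ≤ B
    rw [map_sum]
    exact IsUltrametricDist.norm_sum_le_of_forall_le_of_nonneg hB fun i _ => hf i κ
  have hdiff (s : Finset ι) : memR (g - ∑ i ∈ s, f i) :=
    ⟨Rnorm g + B, Set.forall_mem_range.2 fun κ =>
      (norm_sub_le (g κ) _).trans (add_le_add (norm_le_Rnorm hg κ) (hsum s κ))⟩
  refine le_of_forall_pos_le_add fun ε hε => ?_
  obtain ⟨s, hs⟩ := (h.eventually (gt_mem_nhds hε)).exists
  calc ‖g κ‖ = ‖(∑ i ∈ s, f i) κ + (g - ∑ i ∈ s, f i) κ‖ :=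
        congrArg (‖· κ‖) (add_sub_cancel (∑ i ∈ s, f i) g).symm
    _ ≤ ‖(∑ i ∈ s, f i) κ‖ + ‖(g - ∑ i ∈ s, f i) κ‖ := norm_add_le _ _
    _ ≤ B + ε := add_le_add (hsum s κ) ((norm_le_Rnorm (hdiff s) κ).trans hs.le)

theorem norm_etaTerm_le {p : ℕ} [Fact p.Prime] [NormedAlgebra ℚ_[p] K] {π : K} (hp2 : p ≠ 2)
    (hπ : π ^ (p - 1) = -(p : K)) (hξ : memS a ξ) {ρ : Fin (n + 1) → ℤ} (hρ : 1 ≤ ρ 0)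
    {ν : Msub a} (hν : 2 ≤ ν.1 0) (κ : Fin N →₀ ℕ) :
    ‖etaTerm p a π ξ ρ ν κ‖ ≤ (p : ℝ)⁻¹ * (p : ℝ)⁻¹ * Snorm a ξ := by
  have hS := Snorm_nonneg a ξ
  unfold etaTerm
  split_ifs
  · rw [← smul_mul_assoc]
    exact norm_mul_apply_le (by positivity) hS (norm_zpow_mul_Bone_le a hp2 hπ hν hρ)
      (norm_frobR_le p hS (norm_le_Snorm hξ ν)) κ
  · change ‖(0 : K)‖ ≤ _
    rw [norm_zero]
    positivity

end SupNorm

section Vanishing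

variable {n N : ℕ} {K : Type*} [Field K] (p : ℕ)

theorem frobR_zero : frobR p (0 : MvPowerSeries (Fin N) K) = 0 := by
  funext κ
  unfold frobR
  split_ifs <;> rfl

theorem etaTerm_eq_zero {a : Fin (N + 1) → Fin n → ℤ} {ξ : Msub a → MvPowerSeries (Fin N) K}
    (π : K) (ρ : Fin (n + 1) → ℤ) {ν : Msub a} (hν : ξ ν = 0) : etaTerm p a π ξ ρ ν = 0 := by
  simp [etaTerm, hν, frobR_zero]

end Vanishing

end AHG

theorem stmt_8_general {p : ℕ} [Fact p.Prime] (hp2 : p ≠ 2)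
    {K : Type*} [NormedField K] [NormedAlgebra ℚ_[p] K] [IsUltrametricDist K]
    {π : K} (hπ : π ^ (p - 1) = -(p : K)) {n N : ℕ} {a : Fin (N + 1) → Fin n → ℤ}
    (ha : AHG.uniqueInteriorPoint a) {μ0 : AHG.Msub a} (hμ0 : μ0.1 = AHG.hat (a 0))
    {ξ η : AHG.Msub a → MvPowerSeries (Fin N) K} (hξ : AHG.memS a ξ) (hξ0 : ξ μ0 = 0)
    (hη : ∀ ρ : AHG.Msub a, AHG.HasSumR (AHG.etaTerm p a π ξ ρ.1) (η ρ))
    (hηR : ∀ ρ, AHG.memR (η ρ)) :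
    AHG.Snorm a η ≤ (p : ℝ)⁻¹ * ((p : ℝ)⁻¹ * AHG.Snorm a ξ) := by
  have hS := AHG.Snorm_nonneg a ξ
  have hB : 0 ≤ (p : ℝ)⁻¹ * (p : ℝ)⁻¹ * AHG.Snorm a ξ := by positivity
  rw [← mul_assoc]
  refine AHG.Snorm_le hB fun ρ => AHG.norm_le_of_hasSumR (hηR ρ) (hη ρ) hB fun ν κ => ?_
  rcases eq_or_ne ν μ0 with rfl | hν
  · rw [AHG.etaTerm_eq_zero p π ρ.1 hξ0]
    exact norm_zero.trans_le hB
  · have hν2 := AHG.two_le_of_mem_latticeMint ha ν.2 fun h => hν (Subtype.ext (h.trans hμ0.symm))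
    exact AHG.norm_etaTerm_le hp2 hπ hξ (AHG.one_le_of_mem_latticeMint ρ.2) hν2 κ

/-- if `a_0` is the unique interior lattice point of `Δ`, there is a constant
`C ∈ (0,1)` depending only on `p` such that `‖α*(ξ)‖ ≤ C·(1/p)·‖ξ‖` whenever `ξ ∈ S`
has `ξ_{â_0} = 0`. -/
theorem stmt_8 (p : ℕ) [Fact p.Prime] (hp2 : p ≠ 2) :
    ∃ C : ℝ, 0 < C ∧ C < 1 ∧
      ∀ (K : Type*) [NormedField K] [IsUltrametricDist K] [CompleteSpace K] [IsAlgClosed K],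
        ∀ (ι : ℚ_[p] →+* K), (∀ x, ‖ι x‖ = ‖x‖) →
        ∀ π : K, π ^ (p - 1) = -(p : K) →
        ∀ n N : ℕ, 0 < n → 0 < N → ∀ a : Fin (N + 1) → Fin n → ℤ,
        AHG.uniqueInteriorPoint a →
        ∀ μ0 : AHG.Msub a, μ0.1 = AHG.hat (a 0) →
        ∀ ξ : AHG.Msub a → MvPowerSeries (Fin N) K, AHG.memS a ξ → ξ μ0 = 0 →
        ∀ η : AHG.Msub a → MvPowerSeries (Fin N) K,
          (∀ ρ : AHG.Msub a, AHG.HasSumR (AHG.etaTerm p a π ξ ρ.1) (η ρ)) →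
          AHG.memS a η →
          AHG.Snorm a η ≤ C * ((p : ℝ)⁻¹ * AHG.Snorm a ξ) := by
  have hp : (1 : ℝ) < p := mod_cast (Fact.out : p.Prime).one_lt
  refine ⟨(p : ℝ)⁻¹, by positivity, inv_lt_one_of_one_lt₀ hp, ?_⟩
  intro K _ _ _ _ ι hι π hπ n N _ _ a ha μ0 hμ0 ξ hξ hξ0 η hη hηS
  let _ : NormedAlgebra ℚ_[p] K :=
    { ι.toAlgebra with
      norm_smul_le := fun r x => (norm_mul (ι r) x).trans_le (by rw [hι]) }
  exact stmt_8_general hp2 hπ ha hμ0 hξ hξ0 hη hηS.memR
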